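/- If I is an ass-decomposable monomial ideal in R = K[x_1,…,x_n], then depth(R/I) = min{ dim R/𝔭 : 𝔭 ∈ ass(I) } = n − bigh(I), where bigh(I) is the maximum height of an associated prime of I. -/

import Mathlib

open MvPolynomial

namespace Paper

/-- The depth of a module `M` with respect to an ideal `J`: the supremum of lengths of
`M`-regular sequences consisting of elements of `J`. -/
noncomputable def depth {A : Type} [CommRing A] (J : Ideal A)
    (M : Type) [AddCommGroup M] [Module A M] : ℕ∞ :=
  sSup {k : ℕ∞ | ∃ rs : List A, (rs.length : ℕ∞) = k ∧ (∀ r ∈ rs, r ∈ J) ∧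
    RingTheory.Sequence.IsRegular M rs}

/-- The irrelevant maximal ideal `𝔪 = (x_1, …, x_n)` of `K[x_1, …, x_n]`. -/
noncomputable def mIdeal (n : ℕ) (K : Type) [Field K] : Ideal (MvPolynomial (Fin n) K) :=
  Ideal.span (Set.range X)

/-- The Krull dimension of a module, `dim M = dim (A / ann M)`. -/
noncomputable def mdim (A : Type) [CommRing A] (M : Type) [AddCommGroup M] [Module A M] :
    WithBot ℕ∞ :=
  ringKrullDim (A ⧸ Module.annihilator A M)

/-- A module over `K[x_1, …, x_n]` is Cohen-Macaulay if its depth with respect to the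
irrelevant maximal ideal equals its Krull dimension. -/
def IsCMMod (n : ℕ) (K : Type) [Field K] (M : Type) [AddCommGroup M]
    [Module (MvPolynomial (Fin n) K) M] : Prop :=
  (depth (mIdeal n K) M : WithBot ℕ∞) = mdim (MvPolynomial (Fin n) K) M

/-- A module over `K[x_1, …, x_n]` is sequentially Cohen-Macaulay if it admits a finite
filtration `0 = M_0 ⊂ M_1 ⊂ ⋯ ⊂ M_r = M` with Cohen-Macaulay quotients of strictly
increasing dimensions. -/
def IsSeqCMMod (n : ℕ) (K : Type) [Field K] (M : Type) [AddCommGroup M]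
    [Module (MvPolynomial (Fin n) K) M] : Prop :=
  ∃ (r : ℕ) (f : Fin (r + 1) → Submodule (MvPolynomial (Fin n) K) M),
    f 0 = ⊥ ∧ f (Fin.last r) = ⊤ ∧ StrictMono f ∧
    (∀ i : Fin r,
      IsCMMod n K (↥(f i.succ) ⧸ Submodule.comap (f i.succ).subtype (f i.castSucc))) ∧
    ∀ i j : Fin r, i < j →
      mdim (MvPolynomial (Fin n) K)
          (↥(f i.succ) ⧸ Submodule.comap (f i.succ).subtype (f i.castSucc)) <
        mdim (MvPolynomial (Fin n) K)
          (↥(f j.succ) ⧸ Submodule.comap (f j.succ).subtype (f j.castSucc))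

/-- Height of an ideal (meaningful for prime ideals). -/
noncomputable def htP {A : Type} [CommRing A] (𝔭 : Ideal A) : ℕ∞ :=
  ⨆ (h : 𝔭.IsPrime), Order.height (⟨𝔭, h⟩ : PrimeSpectrum A)

/-- The big height of `I`: the maximum of the heights of the associated primes of `I`. -/
noncomputable def bigh {A : Type} [CommRing A] (I : Ideal A) : ℕ∞ :=
  ⨆ 𝔭 ∈ associatedPrimes A (A ⧸ I), htP 𝔭

/-- A monomial ideal: an ideal generated by monomials. -/
def IsMonomialIdeal {n : ℕ} {K : Type} [Field K] (I : Ideal (MvPolynomial (Fin n) K)) : Prop :=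
  ∃ S : Set (Fin n →₀ ℕ), I = Ideal.span ((fun a => monomial a (1 : K)) '' S)

/-- A squarefree monomial ideal: an ideal generated by squarefree monomials. -/
def IsSquarefreeMonomialIdeal {n : ℕ} {K : Type} [Field K]
    (I : Ideal (MvPolynomial (Fin n) K)) : Prop :=
  ∃ S : Set (Fin n →₀ ℕ), (∀ a ∈ S, ∀ i, a i ≤ 1) ∧
    I = Ideal.span ((fun a => monomial a (1 : K)) '' S)

/-- An ideal `I` is unmixed if `dim A/I = dim A/𝔭` for every associated prime `𝔭` of `I`. -/
def IsUnmixed {A : Type} [CommRing A] (I : Ideal A) : Prop :=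
  ∀ 𝔭 ∈ associatedPrimes A (A ⧸ I), ringKrullDim (A ⧸ I) = ringKrullDim (A ⧸ 𝔭)

/-- ass-decomposable ideals: `I` is ass-decomposable if it is primary, or there are a
variable `x_i ∉ √I` and `k ≥ 1` with `ass(I + (x_i^k)) = {𝔭 ∈ ass(I) : x_i ∈ 𝔭}` such
that `I + (x_i^k)` and `I : x_i^k` are both ass-decomposable. -/
inductive IsAssDecomposable {n : ℕ} {K : Type} [Field K] :
    Ideal (MvPolynomial (Fin n) K) → Prop
  | primary {I : Ideal (MvPolynomial (Fin n) K)} (h : I.IsPrimary) : IsAssDecomposable I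
  | step {I : Ideal (MvPolynomial (Fin n) K)} (i : Fin n) (k : ℕ) (hk : 1 ≤ k)
      (hx : X i ∉ I.radical)
      (hass : associatedPrimes (MvPolynomial (Fin n) K)
          (MvPolynomial (Fin n) K ⧸ (I + Ideal.span {(X i : MvPolynomial (Fin n) K) ^ k})) =
        {𝔭 ∈ associatedPrimes (MvPolynomial (Fin n) K) (MvPolynomial (Fin n) K ⧸ I) |
          (X i : MvPolynomial (Fin n) K) ∈ 𝔭})
      (h1 : IsAssDecomposable (I + Ideal.span {(X i : MvPolynomial (Fin n) K) ^ k}))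
      (h2 : IsAssDecomposable (I.colon (Ideal.span {(X i : MvPolynomial (Fin n) K) ^ k}))) :
      IsAssDecomposable I

/-!
The upper bound holds for every finite module `M` over a Noetherian ring: killing an `M`-regular
`x` turns each `𝔭 ∈ ass(M)` into a strictly larger associated prime of `M / xM`, so a regular
sequence is no longer than a chain of primes above `𝔭`. Applied to a prime of maximal height, this
gives `depth(R/I) ≤ n - bigh(I)`.

The lower bound `n - bigh(I) ≤ depth(R/I)` is an induction on the decomposition. In the inductive
step the exact sequence `0 → R/(I : x_i^k) → R/I → R/(I + (x_i^k)) → 0` and the depth lemma apply,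
since neither outer term has a larger big height than `I`. If `I` is primary, the variables outside
`√I` are regular on `R/I`, and they stay so one after the other because `I` is monomial; the other
variables lie in `√I`, so there are at most `bigh(I)` of them.
-/

section AssociatedPrimes

open Pointwise

variable {R M : Type*} [CommRing R] [AddCommGroup M] [Module R M]

lemma quotSMulTop_map_subtype_injective {N : Submodule R M} {x : R}
    (hreg : IsSMulRegular (M ⧸ N) x) : Function.Injective (QuotSMulTop.map x N.subtype) := by
  have hzero : Function.Exact (0 : PUnit →ₗ[R] N) N.subtype := by
    rw [LinearMap.exact_zero_iff_injective]
    exact N.injective_subtype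
  have := QuotSMulTop.map_first_exact_on_four_term_exact_of_isSMulRegular_last hzero
    (LinearMap.exact_subtype_mkQ N) hreg
  rw [map_zero, LinearMap.exact_zero_iff_injective] at this
  exact this

lemma isSMulRegular_quotient_torsionBySet {x : R} (hreg : IsSMulRegular M x) (s : Set R) :
    IsSMulRegular (M ⧸ Submodule.torsionBySet R M s) x := by
  rw [isSMulRegular_quotient_iff_mem_of_smul_mem]
  intro y hy
  rw [Submodule.mem_torsionBySet_iff] at hy ⊢
  exact fun a => hreg.right_eq_zero_of_smul (by rw [smul_comm, hy a])

lemma annihilator_torsionBySet_of_mem_associatedPrimes [IsNoetherianRing R] {𝔭 : Ideal R}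
    (h𝔭 : 𝔭 ∈ associatedPrimes R M) :
    Module.annihilator R (Submodule.torsionBySet R M (𝔭 : Set R)) = 𝔭 := by
  obtain ⟨-, u, hu⟩ := isAssociatedPrime_iff.1 h𝔭
  have hmem (a : R) : a ∈ 𝔭 ↔ a • u = 0 := by
    rw [hu, Submodule.mem_colon_singleton, Submodule.mem_bot]
  refine le_antisymm (fun a ha => ?_) fun a ha => ?_
  · rw [← Submodule.annihilator, Submodule.mem_annihilator] at ha
    exact (hmem a).2 (ha u ((Submodule.mem_torsionBySet_iff _ _).2 fun b => (hmem b).1 b.2))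
  · rw [← Submodule.annihilator, Submodule.mem_annihilator]
    exact fun y hy => (Submodule.mem_torsionBySet_iff _ _).1 hy ⟨a, ha⟩

lemma exists_gt_mem_associatedPrimes_quotSMulTop [IsNoetherianRing R] [Module.Finite R M]
    {𝔭 𝔪 : Ideal R} [h𝔪 : 𝔪.IsPrime] (h𝔭 : 𝔭 ∈ associatedPrimes R M) (h𝔭𝔪 : 𝔭 ≤ 𝔪) {x : R}
    (hx : x ∈ 𝔪) (hreg : IsSMulRegular M x) :
    ∃ 𝔮 ∈ associatedPrimes R (QuotSMulTop x M), 𝔭 < 𝔮 ∧ 𝔮 ≤ 𝔪 := by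
  -- Inside the `𝔭`-torsion `U`, every prime minimal over `ann (U / xU)` lies above `𝔭` and `x`.
  let U := Submodule.torsionBySet R M (𝔭 : Set R)
  have hU : Module.annihilator R U = 𝔭 := annihilator_torsionBySet_of_mem_associatedPrimes h𝔭
  have hle : Module.annihilator R (QuotSMulTop x U) ≤ 𝔪 := by
    have : (⟨𝔪, h𝔪⟩ : PrimeSpectrum R) ∈ Module.support R (QuotSMulTop x U) := by
      rw [Module.support_quotSMulTop, Module.support_eq_zeroLocus, hU]
      exact ⟨h𝔭𝔪, Set.singleton_subset_iff.2 hx⟩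
    rwa [Module.support_eq_zeroLocus] at this
  obtain ⟨𝔮, h𝔮, h𝔮𝔪⟩ := Ideal.exists_minimalPrimes_le hle
  have h𝔮U : 𝔮 ∈ associatedPrimes R (QuotSMulTop x U) :=
    Module.associatedPrimes.minimalPrimes_annihilator_subset_associatedPrimes R _ h𝔮
  have h𝔭𝔮 : 𝔭 ≤ 𝔮 := calc
    𝔭 = Module.annihilator R U := hU.symm
    _ ≤ Module.annihilator R (QuotSMulTop x U) :=
      LinearMap.annihilator_le_of_surjective _ (Submodule.mkQ_surjective _)
    _ ≤ 𝔮 := h𝔮.1.2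
  have hx𝔮 : x ∈ 𝔮 := h𝔮.1.2 (QuotSMulTop.mem_annihilator _ x)
  have hx𝔭 : x ∉ 𝔭 := fun hx𝔭 => by
    have := Set.mem_biUnion h𝔭 hx𝔭
    rw [biUnion_associatedPrimes_eq_compl_regular] at this
    exact this hreg
  exact ⟨𝔮, associatedPrimes.subset_of_injective (quotSMulTop_map_subtype_injective
    (isSMulRegular_quotient_torsionBySet hreg _)) h𝔮U, lt_of_le_not_ge h𝔭𝔮 fun h => hx𝔭 (h hx𝔮),
    h𝔮𝔪⟩

lemma length_le_coheight_of_isWeaklyRegular [IsNoetherianRing R] [Module.Finite R M]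
    {𝔭 : PrimeSpectrum R} (h𝔭 : 𝔭.asIdeal ∈ associatedPrimes R M) {𝔪 : Ideal R} [𝔪.IsPrime]
    (h𝔭𝔪 : 𝔭.asIdeal ≤ 𝔪) {rs : List R} (hrs : ∀ r ∈ rs, r ∈ 𝔪)
    (hreg : RingTheory.Sequence.IsWeaklyRegular M rs) :
    (rs.length : ℕ∞) ≤ Order.coheight 𝔭 := by
  induction rs generalizing M 𝔭 with
  | nil => simp
  | cons x rs ih =>
    rw [List.forall_mem_cons] at hrs
    rw [RingTheory.Sequence.isWeaklyRegular_cons_iff] at hreg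
    obtain ⟨𝔮, h𝔮, h𝔭𝔮, h𝔮𝔪⟩ :=
      exists_gt_mem_associatedPrimes_quotSMulTop h𝔭 h𝔭𝔪 hrs.1 hreg.1
    calc ((x :: rs).length : ℕ∞) = rs.length + 1 := by simp
      _ ≤ Order.coheight (⟨𝔮, h𝔮.1⟩ : PrimeSpectrum R) + 1 := by
        gcongr
        exact ih (𝔭 := ⟨𝔮, h𝔮.1⟩) h𝔮 h𝔮𝔪 hrs.2 hreg.2
      _ ≤ Order.coheight 𝔭 := Order.coheight_add_one_le h𝔭𝔮

lemma smul_top_lt_top_of_surjective {N : Type*} [AddCommGroup N] [Module R N] {J : Ideal R}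
    {g : M →ₗ[R] N} (hg : Function.Surjective g) (hN : J • (⊤ : Submodule R N) < ⊤) :
    J • (⊤ : Submodule R M) < ⊤ := by
  refine lt_top_iff_ne_top.2 fun hM => hN.ne ?_
  rw [← LinearMap.range_eq_top.2 hg, ← Submodule.map_top, ← Submodule.map_smul'', hM]

end AssociatedPrimes

section Ideal

variable {R : Type*} [CommRing R] {I J : Ideal R}

lemma smul_top_quotient_lt_top (hIJ : I ≤ J) (hJ : J ≠ ⊤) :
    J • (⊤ : Submodule R (R ⧸ I)) < ⊤ := by
  have : Nontrivial (R ⧸ J) := Ideal.Quotient.nontrivial_iff.2 hJ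
  have hJ_smul : J • (⊤ : Submodule R (R ⧸ J)) = ⊥ := by
    rw [← Submodule.le_annihilator_iff, Submodule.annihilator_top, Ideal.annihilator_quotient]
  refine smul_top_lt_top_of_surjective (Submodule.factor_surjective hIJ) ?_
  rw [hJ_smul]
  exact bot_lt_top

lemma ringKrullDim_quotient_asIdeal (𝔭 : PrimeSpectrum R) :
    ringKrullDim (R ⧸ 𝔭.asIdeal) = Order.coheight 𝔭 := by
  rw [ringKrullDim_quotient, Order.coheight_eq_krullDim_Ici]
  rfl

lemma height_add_ringKrullDim_quotient_le (𝔭 : Ideal R) [h𝔭 : 𝔭.IsPrime] :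
    (𝔭.height : WithBot ℕ∞) + ringKrullDim (R ⧸ 𝔭) ≤ ringKrullDim R := by
  have : Nonempty (PrimeSpectrum R) := ⟨⟨𝔭, h𝔭⟩⟩
  rw [ringKrullDim_quotient_asIdeal ⟨𝔭, h𝔭⟩, PrimeSpectrum.height_eq_orderHeight ⟨𝔭, h𝔭⟩,
    ringKrullDim, Order.krullDim_eq_iSup_height_add_coheight_of_nonempty]
  exact_mod_cast le_iSup (fun a : PrimeSpectrum R => Order.height a + Order.coheight a) ⟨𝔭, h𝔭⟩

lemma comap_lsmul_eq_colon (I : Ideal R) (r : R) :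
    Submodule.comap (LinearMap.lsmul R R r) I = I.colon (Ideal.span {r} : Ideal R) := by
  ext a
  rw [Ideal.colon_span, Submodule.mem_colon_singleton, Submodule.mem_comap, LinearMap.lsmul_apply,
    smul_eq_mul, smul_eq_mul, mul_comm]

/-- Multiplication by `r` as a map `R ⧸ (I : r) → R ⧸ I`, the first map of the exact sequence
`0 → R ⧸ (I : r) → R ⧸ I → R ⧸ (I + (r)) → 0`. -/
def mulColon (I : Ideal R) (r : R) : (R ⧸ I.colon (Ideal.span {r} : Ideal R)) →ₗ[R] R ⧸ I :=
  Submodule.mapQ _ I (LinearMap.lsmul R R r) (comap_lsmul_eq_colon I r).ge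

lemma mulColon_injective (I : Ideal R) (r : R) : Function.Injective (mulColon I r) := by
  rw [← LinearMap.ker_eq_bot, mulColon, Submodule.ker_mapQ, comap_lsmul_eq_colon,
    Submodule.mkQ_map_self]

lemma exact_mulColon_factor (I : Ideal R) (r : R) :
    Function.Exact (mulColon I r) (Submodule.factor (le_sup_left : I ≤ I ⊔ Ideal.span {r})) := by
  have hrange : LinearMap.range (LinearMap.lsmul R R r) = Ideal.span {r} := by
    ext a
    simp only [LinearMap.mem_range, LinearMap.lsmul_apply, smul_eq_mul,
      Ideal.mem_span_singleton', mul_comm r]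
  rw [LinearMap.exact_iff, mulColon, Submodule.range_mapQ, hrange, Submodule.factor,
    Submodule.ker_mapQ, Submodule.comap_id, Submodule.map_sup, Submodule.mkQ_map_self, bot_sup_eq]

end Ideal

section Depth

open CategoryTheory Abelian Pointwise

variable {R : Type} [CommRing R] {J : Ideal R} {M M₁ M₂ M₃ : Type}
  [AddCommGroup M] [Module R M] [AddCommGroup M₁] [Module R M₁]
  [AddCommGroup M₂] [Module R M₂] [AddCommGroup M₃] [Module R M₃]

lemma natCast_le_depth_iff [IsNoetherianRing R] [Module.Finite R M]
    (hM : J • (⊤ : Submodule R M) < ⊤) {d : ℕ} :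
    (d : ℕ∞) ≤ depth J M ↔
      ∀ i < d, Subsingleton (Ext (ModuleCat.of R (R ⧸ J)) (ModuleCat.of R M) i) := by
  have hsupp : Module.support R (R ⧸ J) = PrimeSpectrum.zeroLocus J := by
    rw [Module.support_eq_zeroLocus, Ideal.annihilator_quotient]
  constructor
  · intro hd i hi
    obtain ⟨_, ⟨rs, rfl, hrs, hreg⟩, hlt⟩ := lt_sSup_iff.1 ((Nat.cast_lt.2 hi).trans_le hd)
    exact ModuleCat.subsingleton_ext_of_exists_isRegular J (ModuleCat.of R (R ⧸ J)) hsupp.subset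
      (ModuleCat.of R M) hM rs hrs hreg i (Nat.cast_lt.1 hlt)
  · intro hExt
    obtain ⟨rs, hlen, hrs, hreg⟩ := ModuleCat.exists_isRegular_of_exists_subsingleton_ext J d
      (ModuleCat.of R M) hM (ModuleCat.of R (R ⧸ J)) hsupp hExt
    exact le_sSup ⟨rs, by rw [hlen], hrs, hreg⟩

lemma subsingleton_ext_of_exact (N : ModuleCat R) {f : M₁ →ₗ[R] M₂} {g : M₂ →ₗ[R] M₃}
    (hf : Function.Injective f) (hg : Function.Surjective g) (hfg : Function.Exact f g) {i : ℕ}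
    (h₁ : Subsingleton (Ext N (ModuleCat.of R M₁) i))
    (h₃ : Subsingleton (Ext N (ModuleCat.of R M₃) i)) :
    Subsingleton (Ext N (ModuleCat.of R M₂) i) := by
  have hS : (ModuleCat.shortComplexOfCompEqZero f g hfg.linearMap_comp_eq_zero).ShortExact :=
    { exact := ModuleCat.shortComplex_exact _ hfg
      mono_f := (ModuleCat.mono_iff_injective _).2 hf
      epi_g := (ModuleCat.epi_iff_surjective _).2 hg }
  refine subsingleton_of_forall_eq 0 fun y => ?_
  obtain ⟨x, rfl⟩ := Ext.covariant_sequence_exact₂ N hS y (h₃.elim _ _)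
  rw [h₁.elim x 0, Ext.zero_comp]

lemma min_depth_le_depth_of_exact [IsNoetherianRing R] [Module.Finite R M₂]
    {f : M₁ →ₗ[R] M₂} {g : M₂ →ₗ[R] M₃}
    (hf : Function.Injective f) (hg : Function.Surjective g) (hfg : Function.Exact f g)
    (h₁ : J • (⊤ : Submodule R M₁) < ⊤) (h₃ : J • (⊤ : Submodule R M₃) < ⊤) :
    min (depth J M₁) (depth J M₃) ≤ depth J M₂ := by
  have : Module.Finite R M₁ := .of_injective f hf
  have : Module.Finite R M₃ := .of_surjective g hg
  refine ENat.forall_natCast_le_iff_le.1 fun d hd => ?_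
  rw [le_min_iff, natCast_le_depth_iff h₁, natCast_le_depth_iff h₃] at hd
  rw [natCast_le_depth_iff (smul_top_lt_top_of_surjective hg h₃)]
  exact fun i hi => subsingleton_ext_of_exact _ hf hg hfg (hd.1 i hi) (hd.2 i hi)

lemma depth_congr (e : M₁ ≃ₗ[R] M₂) : depth J M₁ = depth J M₂ := by
  simp only [depth, e.isRegular_congr]

lemma depth_quotSMulTop_add_one_le {x : R} [Nontrivial (QuotSMulTop x M)] (hx : x ∈ J)
    (hreg : IsSMulRegular M x) : depth J (QuotSMulTop x M) + 1 ≤ depth J M := by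
  rw [depth, ENat.sSup_add (by exact ⟨0, [], rfl, by simp, .nil R _⟩)]
  refine iSup₂_le ?_
  rintro _ ⟨rs, rfl, hrs, hrs_reg⟩
  exact le_sSup ⟨x :: rs, by simp, List.forall_mem_cons.2 ⟨hx, hrs⟩, hrs_reg.cons hreg⟩

end Depth

section DepthQuotient

open Pointwise

variable {R : Type} [CommRing R] {I J : Ideal R}

lemma depth_le_ringKrullDim_quotient [IsNoetherianRing R] {M : Type} [AddCommGroup M] [Module R M]
    [Module.Finite R M] {𝔪 𝔭 : Ideal R} [𝔪.IsPrime] (h𝔭 : 𝔭 ∈ associatedPrimes R M)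
    (h𝔭𝔪 : 𝔭 ≤ 𝔪) : (depth 𝔪 M : WithBot ℕ∞) ≤ ringKrullDim (R ⧸ 𝔭) := by
  rw [ringKrullDim_quotient_asIdeal ⟨𝔭, h𝔭.1⟩, WithBot.coe_le_coe]
  refine sSup_le ?_
  rintro _ ⟨rs, rfl, hrs, hreg⟩
  exact length_le_coheight_of_isWeaklyRegular (𝔭 := ⟨𝔭, h𝔭.1⟩) h𝔭 h𝔭𝔪 hrs hreg.1

lemma depth_quotient_sup_add_one_le {x : R} (hne : I ⊔ Ideal.span {x} ≠ ⊤) (hx : x ∈ J)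
    (hreg : IsSMulRegular (R ⧸ I) x) :
    depth J (R ⧸ (I ⊔ Ideal.span {x})) + 1 ≤ depth J (R ⧸ I) := by
  have hspan : x • (⊤ : Submodule R (R ⧸ I)) = Submodule.map I.mkQ (Ideal.span {x}) := by
    rw [← Submodule.ideal_span_singleton_smul, ← Submodule.range_mkQ, ← Submodule.map_top,
      ← Submodule.map_smul'', smul_eq_mul, Ideal.mul_top]
  let e : QuotSMulTop x (R ⧸ I) ≃ₗ[R] R ⧸ (I ⊔ Ideal.span {x}) :=
    (Submodule.quotEquivOfEq _ _ hspan).trans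
      (Submodule.quotientQuotientEquivQuotientSup I (Ideal.span {x}))
  have : Nontrivial (R ⧸ (I ⊔ Ideal.span {x})) := Ideal.Quotient.nontrivial_iff.2 hne
  have : Nontrivial (QuotSMulTop x (R ⧸ I)) := e.toEquiv.nontrivial
  rw [← depth_congr e]
  exact depth_quotSMulTop_add_one_le hx hreg

lemma min_depth_colon_depth_sup_le_depth [IsNoetherianRing R] {r : R}
    (hcolon : I.colon (Ideal.span {r} : Ideal R) ≤ J)
    (hsup : I ⊔ Ideal.span {r} ≤ J) (hJ : J ≠ ⊤) :
    min (depth J (R ⧸ I.colon (Ideal.span {r} : Ideal R))) (depth J (R ⧸ (I ⊔ Ideal.span {r}))) ≤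
      depth J (R ⧸ I) :=
  min_depth_le_depth_of_exact (mulColon_injective I r) (Submodule.factor_surjective le_sup_left)
    (exact_mulColon_factor I r) (smul_top_quotient_lt_top hcolon hJ)
    (smul_top_quotient_lt_top hsup hJ)

end DepthQuotient

section BigHeight

variable {R : Type} [CommRing R] {I J 𝔭 : Ideal R}

lemma htP_eq_height [h𝔭 : 𝔭.IsPrime] : htP 𝔭 = 𝔭.height := by
  rw [htP, iSup_pos h𝔭, ← PrimeSpectrum.height_eq_orderHeight]

lemma bigh_mono (h : associatedPrimes R (R ⧸ I) ⊆ associatedPrimes R (R ⧸ J)) :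
    bigh I ≤ bigh J :=
  biSup_mono h

lemma height_le_bigh (h𝔭 : 𝔭 ∈ associatedPrimes R (R ⧸ I)) : 𝔭.height ≤ bigh I := by
  have := h𝔭.1
  rw [← htP_eq_height]
  exact le_biSup htP h𝔭

lemma exists_height_eq_bigh [IsNoetherianRing R] (hI : I ≠ ⊤) :
    ∃ 𝔭 ∈ associatedPrimes R (R ⧸ I), 𝔭.height = bigh I := by
  have : Nontrivial (R ⧸ I) := Ideal.Quotient.nontrivial_iff.2 hI
  obtain ⟨𝔭, h𝔭, hmax⟩ := Set.exists_max_image _ Ideal.height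
    (associatedPrimes.finite R (R ⧸ I)) (associatedPrimes.nonempty R (R ⧸ I))
  refine ⟨𝔭, h𝔭, le_antisymm (height_le_bigh h𝔭) (iSup₂_le fun 𝔮 h𝔮 => ?_)⟩
  have := h𝔮.1
  rw [htP_eq_height]
  exact hmax 𝔮 h𝔮

end BigHeight

section Variables

variable {σ K : Type*} [CommRing K]

lemma isPrime_span_X_image [IsDomain K] (s : Set σ) :
    (Ideal.span (X '' s) : Ideal (MvPolynomial σ K)).IsPrime := by
  classical
  let 𝔭 : Ideal (MvPolynomial σ K) := Ideal.span (X '' s)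
  let φ : MvPolynomial σ K →ₐ[K] MvPolynomial σ K := aeval fun i => if i ∈ s then 0 else X i
  have hφ : (Ideal.Quotient.mkₐ K 𝔭).comp φ = Ideal.Quotient.mkₐ K 𝔭 := by
    ext i
    by_cases hi : i ∈ s
    · have : (X i : MvPolynomial σ K) ∈ 𝔭 := Ideal.subset_span ⟨i, hi, rfl⟩
      simp [φ, hi, Ideal.Quotient.eq_zero_iff_mem.2 this]
    · simp [φ, hi]
  have hker : 𝔭 = RingHom.ker φ := by
    refine le_antisymm (Ideal.span_le.2 ?_) fun f hf => ?_
    · rintro _ ⟨i, hi, rfl⟩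
      simp [φ, RingHom.mem_ker, hi]
    · rw [← Ideal.Quotient.eq_zero_iff_mem, ← Ideal.Quotient.mkₐ_eq_mk K, ← hφ,
        AlgHom.comp_apply, RingHom.mem_ker.1 hf, map_zero]
  change 𝔭.IsPrime
  rw [hker]
  exact RingHom.ker_isPrime _

lemma X_mem_span_X_image_iff [Nontrivial K] {s : Set σ} {i : σ} :
    (X i : MvPolynomial σ K) ∈ Ideal.span (X '' s) ↔ i ∈ s := by
  classical
  simp [mem_ideal_span_X_image, support_X, Finsupp.single_apply]

lemma card_le_height_of_X_mem [IsDomain K] {𝔭 : Ideal (MvPolynomial σ K)} {s : Finset σ}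
    (hs : ∀ i ∈ s, X i ∈ 𝔭) : (s.card : ℕ∞) ≤ 𝔭.height := by
  classical
  suffices (s.card : ℕ∞) ≤ (Ideal.span (X '' (s : Set σ)) : Ideal (MvPolynomial σ K)).height from
    this.trans (Ideal.height_mono (Ideal.span_le.2 (Set.image_subset_iff.2 hs)))
  clear hs
  induction s using Finset.induction_on with
  | empty => simp
  | insert i s hi ih =>
    have := isPrime_span_X_image (K := K) (insert i s : Set σ)
    have := isPrime_span_X_image (K := K) (s : Set σ)
    have hlt : (Ideal.span (X '' s) : Ideal (MvPolynomial σ K)) <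
        Ideal.span (X '' (insert i s : Set σ)) := by
      refine SetLike.lt_iff_le_and_exists.2
        ⟨Ideal.span_mono (Set.image_mono (Set.subset_insert i s)), X i, ?_, ?_⟩
      · rw [X_mem_span_X_image_iff]
        exact Set.mem_insert i s
      · rwa [X_mem_span_X_image_iff, Finset.mem_coe]
    rw [Finset.card_insert_of_notMem hi, Finset.coe_insert]
    push_cast
    exact (add_le_add_left ih 1).trans (Ideal.height_add_one_le_of_lt_of_isPrime hlt)

end Variables

section PolynomialRing

variable {n : ℕ} {K : Type} [Field K] {I J : Ideal (MvPolynomial (Fin n) K)}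

lemma ringKrullDim_quotient_le_sub_height (𝔭 : Ideal (MvPolynomial (Fin n) K)) [h𝔭 : 𝔭.IsPrime] :
    ringKrullDim (MvPolynomial (Fin n) K ⧸ 𝔭) ≤ ((n - 𝔭.height : ℕ∞) : WithBot ℕ∞) := by
  have hdim := height_add_ringKrullDim_quotient_le 𝔭
  rw [MvPolynomial.ringKrullDim_of_isNoetherianRing, ringKrullDim_eq_zero_of_field, zero_add,
    Nat.card_fin, ringKrullDim_quotient_asIdeal ⟨𝔭, h𝔭⟩] at hdim
  rw [ringKrullDim_quotient_asIdeal ⟨𝔭, h𝔭⟩, WithBot.coe_le_coe]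
  exact ENat.le_sub_of_add_le_left (Ideal.height_ne_top h𝔭.ne_top) (by exact_mod_cast hdim)

instance isPrime_mIdeal : (mIdeal n K).IsPrime := by
  rw [mIdeal, ← Set.image_univ]
  exact isPrime_span_X_image _

lemma X_mem_mIdeal (i : Fin n) : X i ∈ mIdeal n K :=
  Ideal.subset_span ⟨i, rfl⟩

namespace IsMonomialIdeal

lemma of_forall_monomial_mem (h : ∀ f ∈ I, ∀ a ∈ f.support, monomial a (1 : K) ∈ I) :
    IsMonomialIdeal I := by
  refine ⟨{a | monomial a (1 : K) ∈ I}, le_antisymm (fun f hf => ?_) ?_⟩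
  · exact mem_ideal_span_monomial_image.2 fun a ha => ⟨a, h f hf a ha, le_rfl⟩
  · exact Ideal.span_le.2 (Set.image_subset_iff.2 fun a ha => ha)

lemma mem_iff (hI : IsMonomialIdeal I) {f : MvPolynomial (Fin n) K} :
    f ∈ I ↔ ∀ a ∈ f.support, monomial a (1 : K) ∈ I := by
  classical
  obtain ⟨S, rfl⟩ := hI
  simp [mem_ideal_span_monomial_image, support_monomial]

lemma monomial_mem_sup_iff (hI : IsMonomialIdeal I) (hJ : IsMonomialIdeal J) {a : Fin n →₀ ℕ} :
    monomial a (1 : K) ∈ I ⊔ J ↔ monomial a (1 : K) ∈ I ∨ monomial a (1 : K) ∈ J := by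
  classical
  obtain ⟨S, rfl⟩ := hI
  obtain ⟨T, rfl⟩ := hJ
  rw [← Ideal.span_union, ← Set.image_union]
  simp [mem_ideal_span_monomial_image, support_monomial, or_and_right, exists_or]

lemma sup (hI : IsMonomialIdeal I) (hJ : IsMonomialIdeal J) : IsMonomialIdeal (I ⊔ J) := by
  obtain ⟨S, rfl⟩ := hI
  obtain ⟨T, rfl⟩ := hJ
  exact ⟨S ∪ T, by rw [Set.image_union, Ideal.span_union]⟩

lemma span_X_pow (i : Fin n) (k : ℕ) :
    IsMonomialIdeal (Ideal.span {(X i : MvPolynomial (Fin n) K) ^ k}) :=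
  ⟨{Finsupp.single i k}, by rw [Set.image_singleton, X_pow_eq_monomial]⟩

lemma span_X (i : Fin n) : IsMonomialIdeal (Ideal.span {(X i : MvPolynomial (Fin n) K)}) := by
  simpa only [pow_one] using span_X_pow i 1

lemma colon_X_pow (hI : IsMonomialIdeal I) (i : Fin n) (k : ℕ) :
    IsMonomialIdeal
      (I.colon (Ideal.span {X i ^ k} : Ideal (MvPolynomial (Fin n) K))) := by
  refine of_forall_monomial_mem fun f hf a ha => ?_
  rw [Ideal.colon_span, Submodule.mem_colon_singleton, smul_eq_mul, X_pow_eq_monomial] at hf ⊢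
  rw [monomial_mul, one_mul]
  refine hI.mem_iff.1 hf _ ?_
  rwa [mem_support_iff, coeff_mul_monomial, mul_one, ← mem_support_iff]

lemma le_mIdeal (hI : IsMonomialIdeal I) (hne : I ≠ ⊤) : I ≤ mIdeal n K := by
  obtain ⟨S, rfl⟩ := hI
  refine Ideal.span_le.2 ?_
  rintro _ ⟨a, ha, rfl⟩
  obtain ⟨i, hi⟩ : ∃ i, a i ≠ 0 := by
    by_contra! ha0
    obtain rfl : a = 0 := Finsupp.ext ha0
    exact hne ((Ideal.eq_top_iff_one _).2 (Ideal.subset_span ⟨0, ha, rfl⟩))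
  exact Ideal.mem_of_dvd _ (X_dvd_monomial.2 (.inr hi)) (X_mem_mIdeal i)

lemma isSMulRegular_X_iff (hI : IsMonomialIdeal I) {j : Fin n} :
    IsSMulRegular (MvPolynomial (Fin n) K ⧸ I) (X j : MvPolynomial (Fin n) K) ↔
      ∀ a, monomial (a + Finsupp.single j 1) (1 : K) ∈ I → monomial a (1 : K) ∈ I := by
  have hX (a : Fin n →₀ ℕ) :
      monomial (a + Finsupp.single j 1) (1 : K) =
        (X j : MvPolynomial (Fin n) K) • monomial a (1 : K) := by
    rw [smul_eq_mul, X, monomial_mul, one_mul, add_comm]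
  rw [isSMulRegular_quotient_iff_mem_of_smul_mem]
  refine ⟨fun h a ha => h _ (by rwa [← hX]),
    fun h f hf => hI.mem_iff.2 fun a ha => h a ?_⟩
  refine hI.mem_iff.1 hf _ ?_
  rwa [smul_eq_mul, mul_comm, mem_support_iff, coeff_mul_X, ← mem_support_iff]

lemma isSMulRegular_X_sup_span_X (hI : IsMonomialIdeal I) {i j : Fin n} (hij : i ≠ j)
    (hj : IsSMulRegular (MvPolynomial (Fin n) K ⧸ I) (X j : MvPolynomial (Fin n) K)) :
    IsSMulRegular (MvPolynomial (Fin n) K ⧸ (I ⊔ Ideal.span {X i}))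
      (X j : MvPolynomial (Fin n) K) := by
  rw [hI.isSMulRegular_X_iff] at hj
  refine (hI.sup (.span_X i)).isSMulRegular_X_iff.2 fun a ha => ?_
  simp only [hI.monomial_mem_sup_iff (.span_X i), Ideal.mem_span_singleton, X_dvd_monomial,
    one_ne_zero, false_or, Finsupp.add_apply, Finsupp.single_eq_of_ne hij, add_zero] at ha ⊢
  exact ha.imp_left (hj a)

lemma card_le_depth (hI : IsMonomialIdeal I) (hne : I ≠ ⊤) {s : Finset (Fin n)}
    (hs : ∀ i ∈ s, IsSMulRegular (MvPolynomial (Fin n) K ⧸ I) (X i : MvPolynomial (Fin n) K)) :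
    (s.card : ℕ∞) ≤ depth (mIdeal n K) (MvPolynomial (Fin n) K ⧸ I) := by
  induction s using Finset.induction_on generalizing I with
  | empty => simp
  | insert i s hi ih =>
    rw [Finset.forall_mem_insert] at hs
    have hsup : I ⊔ Ideal.span {X i} ≠ ⊤ := ne_top_of_le_ne_top isPrime_mIdeal.ne_top <|
      sup_le (hI.le_mIdeal hne) ((Ideal.span_singleton_le_iff_mem _).2 (X_mem_mIdeal i))
    calc ((insert i s).card : ℕ∞) = s.card + 1 := by
          rw [Finset.card_insert_of_notMem hi, Nat.cast_add_one]
      _ ≤ depth (mIdeal n K) (MvPolynomial (Fin n) K ⧸ (I ⊔ Ideal.span {X i})) + 1 := by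
          gcongr
          exact ih (hI.sup (.span_X i)) hsup fun j hj =>
            hI.isSMulRegular_X_sup_span_X (ne_of_mem_of_not_mem hj hi).symm (hs.2 j hj)
      _ ≤ depth (mIdeal n K) (MvPolynomial (Fin n) K ⧸ I) :=
          depth_quotient_sup_add_one_le hsup (X_mem_mIdeal i) hs.1

lemma sub_bigh_le_depth_of_isPrimary (hI : IsMonomialIdeal I) (hprim : I.IsPrimary) :
    n - bigh I ≤ depth (mIdeal n K) (MvPolynomial (Fin n) K ⧸ I) := by
  classical
  let s : Finset (Fin n) := {i | X i ∈ I.radical}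
  have hs : (s.card : ℕ∞) ≤ bigh I := calc
    (s.card : ℕ∞) ≤ I.radical.height := card_le_height_of_X_mem fun i hi => by simpa [s] using hi
    _ ≤ bigh I := height_le_bigh (by rw [associatedPrimes.eq_singleton_of_isPrimary hprim]; rfl)
  have hreg : ∀ i ∈ sᶜ, IsSMulRegular (MvPolynomial (Fin n) K ⧸ I)
      (X i : MvPolynomial (Fin n) K) := fun i hi => by
    rw [isSMulRegular_quotient_iff_mem_of_smul_mem]
    intro f hf
    rw [smul_eq_mul, mul_comm] at hf
    exact ((Ideal.isPrimary_iff.1 hprim).2 hf).resolve_right (by simpa [s] using hi)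
  calc n - bigh I ≤ n - s.card := tsub_le_tsub_left hs _
    _ = sᶜ.card := by rw [Finset.card_compl, Fintype.card_fin, ENat.natCast_sub]
    _ ≤ depth (mIdeal n K) (MvPolynomial (Fin n) K ⧸ I) := hI.card_le_depth hprim.1 hreg

end IsMonomialIdeal

namespace IsAssDecomposable

lemma ne_top (hI : IsAssDecomposable I) : I ≠ ⊤ := by
  cases hI with
  | primary hprim => exact hprim.1
  | step _ _ _ hx =>
    rintro rfl
    exact hx (Ideal.le_radical trivial)

lemma le_mIdeal_of_mem_associatedPrimes (hdec : IsAssDecomposable I) (hI : IsMonomialIdeal I)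
    {𝔭 : Ideal (MvPolynomial (Fin n) K)}
    (h𝔭 : 𝔭 ∈ associatedPrimes _ (MvPolynomial (Fin n) K ⧸ I)) : 𝔭 ≤ mIdeal n K := by
  induction hdec with
  | primary hprim =>
    rw [associatedPrimes.eq_singleton_of_isPrimary hprim, Set.mem_singleton_iff] at h𝔭
    rw [h𝔭, isPrime_mIdeal.radical_le_iff]
    exact hI.le_mIdeal hprim.1
  | @step I i k _ _ _ _ _ ih_sup ih_colon =>
    rcases associatedPrimes.subset_union_of_exact (mulColon_injective I (X i ^ k))
      (exact_mulColon_factor I (X i ^ k)) h𝔭 with h𝔭 | h𝔭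
    · exact ih_colon (hI.colon_X_pow i k) h𝔭
    · exact ih_sup (hI.sup (.span_X_pow i k)) h𝔭

lemma sub_bigh_le_depth (hdec : IsAssDecomposable I) (hI : IsMonomialIdeal I) :
    n - bigh I ≤ depth (mIdeal n K) (MvPolynomial (Fin n) K ⧸ I) := by
  induction hdec with
  | primary hprim => exact hI.sub_bigh_le_depth_of_isPrimary hprim
  | @step I i k _ _ hass hdec_sup hdec_colon ih_sup ih_colon =>
    rw [Submodule.add_eq_sup] at hass hdec_sup ih_sup
    have hsup := hI.sup (.span_X_pow i k)
    have hcolon := hI.colon_X_pow i k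
    have hbigh_sup : bigh (I ⊔ Ideal.span {X i ^ k}) ≤ bigh I :=
      bigh_mono (hass.trans_subset (Set.sep_subset _ _))
    have hbigh_colon : bigh (I.colon (Ideal.span {X i ^ k} : Ideal (MvPolynomial (Fin n) K))) ≤
        bigh I :=
      bigh_mono (associatedPrimes.subset_of_injective (mulColon_injective I (X i ^ k)))
    refine (le_min ?_ ?_).trans <| min_depth_colon_depth_sup_le_depth
      (hcolon.le_mIdeal hdec_colon.ne_top) (hsup.le_mIdeal hdec_sup.ne_top) isPrime_mIdeal.ne_top
    · exact (tsub_le_tsub_left hbigh_colon _).trans (ih_colon hcolon)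
    · exact (tsub_le_tsub_left hbigh_sup _).trans (ih_sup hsup)

end IsAssDecomposable

end PolynomialRing

/-- If `I` is an ass-decomposable monomial ideal, then
`depth R/I = min {dim R/𝔭 : 𝔭 ∈ ass(I)} = n - bigh(I)`. -/
theorem statement_10 (n : ℕ) (K : Type) [Field K] (I : Ideal (MvPolynomial (Fin n) K))
    (hmon : IsMonomialIdeal I) (hdec : IsAssDecomposable I) :
    (depth (mIdeal n K) (MvPolynomial (Fin n) K ⧸ I) : WithBot ℕ∞) =
        sInf {d : WithBot ℕ∞ | ∃ 𝔭 ∈ associatedPrimes (MvPolynomial (Fin n) K) (MvPolynomial (Fin n) K ⧸ I),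
          d = ringKrullDim (MvPolynomial (Fin n) K ⧸ 𝔭)} ∧
    depth (mIdeal n K) (MvPolynomial (Fin n) K ⧸ I) = (n : ℕ∞) - bigh I := by
  have hlower := hdec.sub_bigh_le_depth hmon
  have hupper : ∀ 𝔭 ∈ associatedPrimes (MvPolynomial (Fin n) K) (MvPolynomial (Fin n) K ⧸ I),
      (depth (mIdeal n K) (MvPolynomial (Fin n) K ⧸ I) : WithBot ℕ∞) ≤
        ringKrullDim (MvPolynomial (Fin n) K ⧸ 𝔭) := fun 𝔭 h𝔭 =>
    depth_le_ringKrullDim_quotient h𝔭 (hdec.le_mIdeal_of_mem_associatedPrimes hmon h𝔭)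
  obtain ⟨𝔭, h𝔭, hbigh⟩ := exists_height_eq_bigh hdec.ne_top
  have hdim : ringKrullDim (MvPolynomial (Fin n) K ⧸ 𝔭) ≤ ((n - bigh I : ℕ∞) : WithBot ℕ∞) := by
    have := h𝔭.1
    rw [← hbigh]
    exact ringKrullDim_quotient_le_sub_height 𝔭
  refine ⟨le_antisymm (le_sInf ?_) (sInf_le_of_le ⟨𝔭, h𝔭, rfl⟩ ?_), le_antisymm ?_ hlower⟩
  · rintro _ ⟨𝔮, h𝔮, rfl⟩
    exact hupper 𝔮 h𝔮
  · exact hdim.trans (WithBot.coe_le_coe.2 hlower)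
  · exact WithBot.coe_le_coe.1 ((hupper 𝔭 h𝔭).trans hdim)

end Paper
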